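/- Let d(n) denote the number of permutations of length n avoiding the patterns 4213 and 2143. Then d(1) = 1, d(2) = 2, d(3) = 6, d(4) = 22, d(5) = 88, d(6) = 366, d(7) = 1556, d(8) = 6720, d(9) = 29396, d(10) = 129996, d(11) = 580276 and d(12) = 2611290. -/

import Mathlib

open Filter Topology PowerSeries

/-- `σ` contains the pattern `π`. -/
def PatternContains {n k : ℕ} (σ : Equiv.Perm (Fin n)) (π : Fin k → Fin k) : Prop :=
  ∃ f : Fin k → Fin n, StrictMono f ∧ ∀ a b : Fin k, π a < π b ↔ σ (f a) < σ (f b)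

/-- `σ` avoids the pattern `π`. -/
def PatternAvoids {n k : ℕ} (σ : Equiv.Perm (Fin n)) (π : Fin k → Fin k) : Prop :=
  ¬ PatternContains σ π

/-- The pattern 4213 (zero-indexed values). -/
def p4213 : Fin 4 → Fin 4 := ![3, 1, 0, 2]

/-- The pattern 2413 (zero-indexed values). -/
def p2413 : Fin 4 → Fin 4 := ![1, 3, 0, 2]

/-- The pattern 2143 (zero-indexed values). -/
def p2143 : Fin 4 → Fin 4 := ![1, 0, 3, 2]

/-- The pattern 213 (zero-indexed values). -/
def p213 : Fin 3 → Fin 3 := ![1, 0, 2]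

/-- `σ` avoids 4213, 2413 and 2143. -/
def AvoidsH {n : ℕ} (σ : Equiv.Perm (Fin n)) : Prop :=
  PatternAvoids σ p4213 ∧ PatternAvoids σ p2413 ∧ PatternAvoids σ p2143

/-- `σ` avoids 4213 and 2143. -/
def AvoidsD {n : ℕ} (σ : Equiv.Perm (Fin n)) : Prop :=
  PatternAvoids σ p4213 ∧ PatternAvoids σ p2143

/-- An H-gridding of `σ`: a value cutoff `k ∈ {0,…,n}` such that the subsequence of
entries with (1-based) values `> k` is increasing and the subsequence of entries with
values `≤ k` avoids 213. -/
def HGridding {n : ℕ} (σ : Equiv.Perm (Fin n)) (k : ℕ) : Prop :=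
  k ≤ n ∧
  (∀ i j : Fin n, i < j → k < (σ i : ℕ) + 1 → k < (σ j : ℕ) + 1 → σ i < σ j) ∧
  ¬ ∃ f : Fin 3 → Fin n, StrictMono f ∧ (∀ a, (σ (f a) : ℕ) + 1 ≤ k) ∧
      (∀ a b : Fin 3, p213 a < p213 b ↔ σ (f a) < σ (f b))

/-- A G-gridding of `σ`: a pair `(j, k)` with `0 ≤ j, k ≤ n` such that (i) the first `j`
entries have values `≤ k` and are increasing, (ii) the subsequence of entries at
(1-based) positions `> j` with values `> k` is increasing, and (iii) the subsequence of
entries at positions `> j` with values `≤ k` avoids 213. -/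
def GGridding {n : ℕ} (σ : Equiv.Perm (Fin n)) (j k : ℕ) : Prop :=
  j ≤ n ∧ k ≤ n ∧
  (∀ i : Fin n, (i : ℕ) < j → (σ i : ℕ) + 1 ≤ k) ∧
  (∀ i₁ i₂ : Fin n, i₁ < i₂ → (i₂ : ℕ) < j → σ i₁ < σ i₂) ∧
  (∀ i₁ i₂ : Fin n, i₁ < i₂ → j ≤ (i₁ : ℕ) → k < (σ i₁ : ℕ) + 1 → k < (σ i₂ : ℕ) + 1 →
      σ i₁ < σ i₂) ∧
  ¬ ∃ f : Fin 3 → Fin n, StrictMono f ∧ (∀ a, j ≤ ((f a) : ℕ) ∧ (σ (f a) : ℕ) + 1 ≤ k) ∧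
      (∀ a b : Fin 3, p213 a < p213 b ↔ σ (f a) < σ (f b))

/-- The number of permutations of length `n` avoiding 4213, 2413 and 2143. -/
noncomputable def hCount (n : ℕ) : ℕ :=
  Nat.card {σ : Equiv.Perm (Fin n) // AvoidsH σ}

/-- The number of permutations of length `n` avoiding 4213 and 2143. -/
noncomputable def dCount (n : ℕ) : ℕ :=
  Nat.card {σ : Equiv.Perm (Fin n) // AvoidsD σ}

/-- The minimal number of top points over all H-griddings of `σ`. -/
noncomputable def topPts {n : ℕ} (σ : Equiv.Perm (Fin n)) : ℕ :=
  n - sSup {k | HGridding σ k}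

/-- The minimal number of left points over all G-griddings of `σ`. -/
noncomputable def leftPts {n : ℕ} (σ : Equiv.Perm (Fin n)) : ℕ :=
  sInf {j | ∃ k, GGridding σ j k}


namespace InsertionTree

/-! ### Appending a last entry to a permutation -/

/-- The permutation obtained from `σ` by appending a last entry with value `v`. -/
def append {m : ℕ} (σ : Equiv.Perm (Fin m)) (v : Fin (m + 1)) : Equiv.Perm (Fin (m + 1)) :=
  (finSuccEquiv' (Fin.last m)).trans ((Equiv.optionCongr σ).trans (finSuccEquiv' v).symm)

@[simp]
theorem append_last {m : ℕ} (σ : Equiv.Perm (Fin m)) (v : Fin (m + 1)) :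
    append σ v (Fin.last m) = v := by
  simp [append]

@[simp]
theorem append_castSucc {m : ℕ} (σ : Equiv.Perm (Fin m)) (v : Fin (m + 1)) (i : Fin m) :
    append σ v i.castSucc = v.succAbove (σ i) := by
  simp [append, finSuccEquiv'_last_apply_castSucc]

theorem val_succAbove {m : ℕ} (v : Fin (m + 1)) (x : Fin m) :
    (v.succAbove x : ℕ) = if (x : ℕ) < v then (x : ℕ) else x + 1 := by
  simp only [Fin.succAbove, Fin.lt_def, Fin.val_castSucc]
  split_ifs <;> simp

theorem append_bijective (m : ℕ) :
    Function.Bijective (fun p : Equiv.Perm (Fin m) × Fin (m + 1) => append p.1 p.2) := by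
  rw [Fintype.bijective_iff_injective_and_card]
  constructor
  · rintro ⟨σ, v⟩ ⟨τ, w⟩ h
    have hvw : v = w := by simpa using congrArg (fun ρ => ρ (Fin.last m)) h
    subst hvw
    refine Prod.ext (Equiv.ext fun i => ?_) rfl
    simpa using congrArg (fun ρ => ρ i.castSucc) h
  · simp [Fintype.card_perm, Nat.factorial_succ, mul_comm]

/-! ### Gap states -/

/-- The information about a permutation that governs the ways of extending it to the right.
Gap `g` lies just below the value `g`. -/
@[ext]
structure GapState where
  /-- The length of the permutation; its gaps are `0, …, size`. -/
  size : ℕ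
  /-- An entry may be appended in gap `g` without creating a forbidden pattern. -/
  active : ℕ → Prop
  /-- Some value below gap `g` is the larger entry of an inversion. -/
  aboveTop : ℕ → Prop
  /-- Some inversion straddles gap `g` and has its smaller entry above gap `u`. -/
  straddled : ℕ → ℕ → Prop

/-- The gap before appending an entry in gap `v` that contains gap `g` afterwards. -/
def parentGap (v g : ℕ) : ℕ := if g ≤ v then g else g - 1

/-- The effect on the gap state of appending an entry in gap `v`. -/
def GapState.insertAt (S : GapState) (v : ℕ) : GapState where
  size := S.size + 1
  active g := S.active (parentGap v g) ∧ ¬ (S.aboveTop (parentGap v g) ∧ g ≤ v) ∧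
    ¬ S.straddled v (parentGap v g)
  aboveTop g := S.aboveTop (parentGap v g) ∨ (v + 1 < g ∧ v < S.size)
  straddled u g := S.straddled (parentGap v u) (parentGap v g) ∨ (u ≤ v ∧ v < g ∧ g ≤ S.size)

open Classical in
/-- The number of ways of appending `s` further entries, always in active gaps. -/
noncomputable def GapState.extensions : ℕ → GapState → ℕ
  | 0, _ => 1
  | s + 1, S => ∑ v ∈ (Finset.range (S.size + 1)).filter S.active, extensions s (S.insertAt v)

/-- The gap state of a permutation. -/
def gapState {m : ℕ} (σ : Equiv.Perm (Fin m)) : GapState where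
  size := m
  active g := ¬ ∃ i j k : Fin m, i < j ∧ j < k ∧
    (((σ k : ℕ) < σ j ∧ (σ j : ℕ) < g ∧ g ≤ σ i) ∨
      ((σ j : ℕ) < σ i ∧ (σ i : ℕ) < g ∧ g ≤ σ k))
  aboveTop g := ∃ i j : Fin m, i < j ∧ (σ j : ℕ) < σ i ∧ (σ i : ℕ) < g
  straddled u g := ∃ i j : Fin m, i < j ∧ u ≤ (σ j : ℕ) ∧ (σ j : ℕ) < g ∧ g ≤ (σ i : ℕ)

theorem gapState_append_aboveTop {m : ℕ} (σ : Equiv.Perm (Fin m)) (v : Fin (m + 1)) (g : ℕ) :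
    (gapState (append σ v)).aboveTop g ↔ ((gapState σ).insertAt v).aboveTop g := by
  simp only [gapState, GapState.insertAt, Fin.exists_fin_succ', append_castSucc, append_last,
    val_succAbove, Fin.castSucc_lt_castSucc_iff, Fin.castSucc_lt_last, parentGap]
  constructor
  · rintro (⟨i, ⟨j, h⟩ | h⟩ | ⟨⟨j, h⟩ | h⟩)
    · exact Or.inl ⟨i, j, by grind⟩
    · exact Or.inr (by grind)
    · exact absurd h.1 (by simp [Fin.le_last])
    · simp at h
  · rintro (⟨i, j, h⟩ | h)
    · exact Or.inl ⟨i, Or.inl ⟨j, by grind⟩⟩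
    · refine Or.inl ⟨σ.symm ⟨v, h.2⟩, Or.inr ?_⟩
      simp [h.1]

theorem gapState_append_straddled {m : ℕ} (σ : Equiv.Perm (Fin m)) (v : Fin (m + 1))
    (u g : ℕ) :
    (gapState (append σ v)).straddled u g ↔ ((gapState σ).insertAt v).straddled u g := by
  simp only [gapState, GapState.insertAt, Fin.exists_fin_succ', append_castSucc, append_last,
    val_succAbove, Fin.castSucc_lt_castSucc_iff, Fin.castSucc_lt_last, parentGap]
  constructor
  · rintro (⟨i, ⟨j, h⟩ | h⟩ | ⟨⟨j, h⟩ | h⟩)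
    · exact Or.inl ⟨i, j, by grind⟩
    · exact Or.inr (by grind)
    · exact absurd h.1 (by simp [Fin.le_last])
    · simp at h
  · rintro (⟨i, j, h⟩ | h)
    · exact Or.inl ⟨i, Or.inl ⟨j, by grind⟩⟩
    · refine Or.inl ⟨σ.symm ⟨g - 1, by omega⟩, Or.inr ?_⟩
      simp only [Equiv.apply_symm_apply]
      grind

theorem gapState_append_active {m : ℕ} (σ : Equiv.Perm (Fin m)) (v : Fin (m + 1)) (g : ℕ) :
    (gapState (append σ v)).active g ↔ ((gapState σ).insertAt v).active g := by
  simp only [gapState, GapState.insertAt, Fin.exists_fin_succ', append_castSucc, append_last,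
    val_succAbove, Fin.castSucc_lt_castSucc_iff, Fin.castSucc_lt_last, parentGap]
  have hlast (i : Fin m) : ¬ Fin.last m < i.castSucc := by simp [Fin.le_last]
  simp only [hlast, lt_self_iff_false, false_and, and_false, or_false, exists_false, true_and]
  rw [← not_or, ← not_or, not_iff_not]
  constructor
  · rintro ⟨i, j, ⟨k, h⟩ | h⟩
    · exact Or.inl ⟨i, j, k, by grind⟩
    · rcases h with ⟨h, h' | h'⟩
      · exact Or.inr (Or.inr ⟨i, j, by grind⟩)
      · exact Or.inr (Or.inl ⟨⟨i, j, by grind⟩, by grind⟩)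
  · rintro (⟨i, j, k, h⟩ | ⟨⟨i, j, h⟩, hg⟩ | ⟨i, j, h⟩)
    · exact ⟨i, j, Or.inl ⟨k, by grind⟩⟩
    · exact ⟨i, j, Or.inr ⟨h.1, by grind⟩⟩
    · exact ⟨i, j, Or.inr ⟨h.1, by grind⟩⟩

theorem gapState_append {m : ℕ} (σ : Equiv.Perm (Fin m)) (v : Fin (m + 1)) :
    gapState (append σ v) = (gapState σ).insertAt v := by
  apply GapState.ext
  · rfl
  · exact funext fun g => propext (gapState_append_active σ v g)
  · exact funext fun g => propext (gapState_append_aboveTop σ v g)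
  · exact funext fun u => funext fun g => propext (gapState_append_straddled σ v u g)

theorem avoidsD_iff {m : ℕ} (σ : Equiv.Perm (Fin m)) :
    AvoidsD σ ↔ ¬ ∃ i j k l : Fin m, i < j ∧ j < k ∧ k < l ∧
      ((σ k < σ j ∧ σ j < σ l ∧ σ l < σ i) ∨ (σ j < σ i ∧ σ i < σ l ∧ σ l < σ k)) := by
  rw [AvoidsD, PatternAvoids, PatternAvoids, ← not_or, not_iff_not]
  constructor
  · rintro (⟨f, hf, h⟩ | ⟨f, hf, h⟩) <;>
      refine ⟨f 0, f 1, f 2, f 3, hf (by decide), hf (by decide), hf (by decide), ?_⟩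
    · exact Or.inl ⟨(h 2 1).1 (by decide), (h 1 3).1 (by decide), (h 3 0).1 (by decide)⟩
    · exact Or.inr ⟨(h 1 0).1 (by decide), (h 0 3).1 (by decide), (h 3 2).1 (by decide)⟩
  · rintro ⟨i, j, k, l, hij, hjk, hkl, h | h⟩
    · refine Or.inl ⟨![i, j, k, l], ?_, ?_⟩
      · rw [Fin.strictMono_iff_lt_succ]
        intro a
        fin_cases a <;> simp [hij, hjk, hkl]
      · intro a b
        fin_cases a <;> fin_cases b <;> simp [p4213] <;> grind
    · refine Or.inr ⟨![i, j, k, l], ?_, ?_⟩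
      · rw [Fin.strictMono_iff_lt_succ]
        intro a
        fin_cases a <;> simp [hij, hjk, hkl]
      · intro a b
        fin_cases a <;> fin_cases b <;> simp [p2143] <;> grind

theorem avoidsD_append_iff {m : ℕ} (σ : Equiv.Perm (Fin m)) (v : Fin (m + 1)) :
    AvoidsD (append σ v) ↔ AvoidsD σ ∧ (gapState σ).active v := by
  simp only [avoidsD_iff, gapState, Fin.exists_fin_succ', append_castSucc, append_last,
    Fin.lt_def, val_succAbove, Fin.val_castSucc, Fin.val_last]
  have hlast (i : Fin m) : ¬ m < (i : ℕ) := by omega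
  simp only [hlast, Fin.is_lt, lt_self_iff_false, false_and, and_false, or_false, exists_false,
    true_and]
  rw [← not_or, not_iff_not]
  constructor
  · rintro ⟨i, j, k, ⟨l, h⟩ | h⟩
    · exact Or.inl ⟨i, j, k, l, by grind⟩
    · exact Or.inr ⟨i, j, k, by grind⟩
  · rintro (⟨i, j, k, l, h⟩ | ⟨i, j, k, h⟩)
    · exact ⟨i, j, k, Or.inl ⟨l, by grind⟩⟩
    · exact ⟨i, j, k, Or.inr (by grind)⟩

open Classical in
theorem sum_extensions_gapState (s m : ℕ) :
    ∑ σ : Equiv.Perm (Fin m) with AvoidsD σ, (gapState σ).extensions s = dCount (m + s) := by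
  induction s generalizing m with
  | zero => simp [GapState.extensions, dCount, Nat.card_eq_fintype_card, Fintype.card_subtype]
  | succ s ih =>
    rw [show m + (s + 1) = m + 1 + s by ring, ← ih (m + 1), Finset.sum_filter, Finset.sum_filter,
      ← (append_bijective m).sum_comp, Fintype.sum_prod_type]
    refine Finset.sum_congr rfl fun σ _ => ?_
    simp only [avoidsD_append_iff, gapState_append]
    split_ifs with h
    · simp only [h, true_and]
      rw [GapState.extensions, Finset.sum_filter]
      exact Finset.sum_range
        (fun v => if (gapState σ).active v then ((gapState σ).insertAt v).extensions s else 0)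
    · simp [h]

/-- The gap state of the increasing permutation of length `m`. -/
def increasingState (m : ℕ) : GapState := ⟨m, fun _ => True, fun _ => False, fun _ _ => False⟩

theorem dCount_eq_extensions (n : ℕ) : dCount n = (increasingState 0).extensions n := by
  have h := sum_extensions_gapState n 0
  have hstate (σ : Equiv.Perm (Fin 0)) : gapState σ = increasingState 0 := by
    simp [gapState, increasingState]
  have havoid (σ : Equiv.Perm (Fin 0)) : AvoidsD σ := by
    simp [avoidsD_iff]
  simpa [hstate, havoid] using h.symm

/-! ### Counting extensions by numbers of gaps -/

/-- The value of `φ` at `n`. Reducing this expression evaluates `n` to a numeral first. -/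
def forceAt {α : Type} (n : ℕ) (φ : ℕ → α) : α := Nat.rec (φ 0) (fun m _ => φ (m + 1)) n

@[simp]
theorem forceAt_eq {α : Type} (n : ℕ) (φ : ℕ → α) : forceAt n φ = φ n := by
  cases n <;> rfl

/-- The sum of `φ` over the natural numbers below `n`. -/
def sumBelow (n : ℕ) (φ : ℕ → ℕ) : ℕ := Nat.rec 0 (fun i t => t + φ i) n

@[simp]
theorem sumBelow_eq (n : ℕ) (φ : ℕ → ℕ) : sumBelow n φ = ∑ i ∈ Finset.range n, φ i := by
  induction n with
  | zero => rfl
  | succ n ih => rw [Finset.sum_range_succ, ← ih]; rfl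

/-- The number of ways of appending `s` entries to a permutation with a descent that has, below
the top gap and from bottom to top, `a` active gaps straddled by no inversion, `k` active gaps
straddled by inversions and having no larger entry of an inversion below them, and `r` active gaps
with such an entry below them. The flag `f` says whether appending an entry in the topmost of the
`k` gaps keeps the `r` gaps active. -/
def descentCount : ℕ → ℕ → ℕ → ℕ → Bool → ℕ
  | 0, _, _, _, _ => 1
  | s + 1, a, k, r, f =>
    sumBelow a (fun i => forceAt (i + 1) fun a' => forceAt (a - 1 - i) fun r' =>
      descentCount s a' 1 r' true) +
    (sumBelow k (fun i => forceAt (i + 2) fun k' =>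
      forceAt (bif f && Nat.beq (k - 1 - i) 0 then r else 0) fun r' =>
        descentCount s a k' r' true) +
    (sumBelow r (fun i => forceAt (r - 1 - i + 1) fun r' => descentCount s a k r' false) +
    descentCount s a k 0 true))

/-- The number of ways of appending `s` entries to the increasing permutation of length `m`. -/
def increasingCount : ℕ → ℕ → ℕ
  | 0, _ => 1
  | s + 1, m =>
    sumBelow m (fun i => forceAt (i + 1) fun a => forceAt (m - 1 - i) fun r =>
      descentCount s a 1 r true) +
    forceAt (m + 1) fun m' => increasingCount s m'

theorem sum_rank (A : Finset ℕ) (φ : ℕ → ℕ → ℕ) :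
    ∑ v ∈ A, φ (A.filter (· < v)).card (A.filter (v < ·)).card =
      ∑ i ∈ Finset.range A.card, φ i (A.card - 1 - i) := by
  induction A using Finset.induction_on_max generalizing φ with
  | empty => simp
  | insert x A hx ih =>
    have hxA : x ∉ A := fun h => lt_irrefl _ (hx x h)
    rw [Finset.sum_insert hxA, Finset.card_insert_of_notMem hxA, Finset.sum_range_succ, add_comm]
    congr 1
    · trans ∑ i ∈ Finset.range A.card, φ i (A.card - 1 - i + 1)
      · rw [← ih fun i j => φ i (j + 1)]
        refine Finset.sum_congr rfl fun v hv => ?_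
        have hvx := hx v hv
        rw [Finset.filter_insert, Finset.filter_insert, if_neg (by omega), if_pos hvx,
          Finset.card_insert_of_notMem (by simp [hxA])]
      · refine Finset.sum_congr rfl fun i hi => ?_
        have := Finset.mem_range.1 hi
        congr 1
        omega
    · rw [Finset.filter_insert, Finset.filter_insert, if_neg (lt_irrefl x), if_neg (lt_irrefl x),
        Finset.filter_true_of_mem hx, Finset.filter_false_of_mem fun y hy => (hx y hy).not_gt]
      simp

/-- The active gaps of `S` below the top one are those in `A`, `K` and `R`, which play the roles of
the `a`, `k` and `r` gaps in `descentCount`, with flag `f`. -/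
structure GapState.Realizes (S : GapState) (A K R : Finset ℕ) (f : Bool) : Prop where
  active_iff : ∀ g ≤ S.size, S.active g ↔ g ∈ A ∨ g ∈ K ∨ g ∈ R ∨ g = S.size
  lt_AK : ∀ x ∈ A, ∀ y ∈ K, x < y
  lt_KR : ∀ x ∈ K, ∀ y ∈ R, x < y
  lt_AR : ∀ x ∈ A, ∀ y ∈ R, x < y
  lt_A : ∀ x ∈ A, x < S.size
  lt_K : ∀ x ∈ K, x < S.size
  lt_R : ∀ x ∈ R, x < S.size
  aboveTop_A : ∀ x ∈ A, ¬ S.aboveTop x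
  aboveTop_K : ∀ x ∈ K, ¬ S.aboveTop x
  aboveTop_R : ∀ x ∈ R, S.aboveTop x
  aboveTop_size : S.aboveTop S.size
  straddled_lt : ∀ u g, S.straddled u g → u < g
  straddled_size : ∀ u, ¬ S.straddled u S.size
  straddled_A : ∀ u, ∀ g ∈ A, ¬ S.straddled u g
  straddled_AK : ∀ u ∈ A, ∀ g ∈ K, S.straddled u g
  straddled_KK : ∀ u ∈ K, ∀ g ∈ K, u < g → S.straddled u g
  straddled_AR : ∀ u ∈ A, ∀ g ∈ R, S.straddled u g
  straddled_KR : ∀ u ∈ K, ∀ g ∈ R,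
    S.straddled u g ↔ ((∃ w ∈ K, u < w) ∨ f = false)
  straddled_RR : ∀ u ∈ R, ∀ g ∈ R, ¬ S.straddled u g

theorem GapState.insertAt_active_of_le (S : GapState) {v g : ℕ} (h : g ≤ v) :
    (S.insertAt v).active g ↔ S.active g ∧ ¬ S.aboveTop g ∧ ¬ S.straddled v g := by
  grind [insertAt, parentGap]

theorem GapState.insertAt_active_add_one (S : GapState) {v g : ℕ} (h : v ≤ g) :
    (S.insertAt v).active (g + 1) ↔ S.active g ∧ ¬ S.straddled v g := by
  grind [insertAt, parentGap]

namespace GapState.Realizes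

variable {S : GapState} {A K R : Finset ℕ} {f : Bool}

theorem insert_A (h : S.Realizes A K R f) {v : ℕ} (hv : v ∈ A) :
    (S.insertAt v).Realizes (insert v (A.filter (· < v))) {v + 1}
      ((A.filter (v < ·)).image (· + 1)) true := by
  obtain ⟨hactive, hAK, hKR, hAR, hA, hK, hR, htA, htK, htR, htop, hlt, hsize, hsA, hsAK, hsKK,
    hsAR, hsKR, hsRR⟩ := h
  constructor
  · intro g hg
    replace hg : g ≤ S.size + 1 := hg
    rcases le_or_gt g v with hgv | hgv
    · rw [S.insertAt_active_of_le hgv, hactive g (by grind)]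
      clear hactive
      grind [GapState.insertAt]
    · obtain ⟨g, rfl⟩ := Nat.exists_eq_succ_of_ne_zero (Nat.ne_zero_of_lt hgv)
      rw [Nat.succ_eq_add_one, S.insertAt_active_add_one (Nat.le_of_lt_succ hgv),
        hactive g (by omega)]
      clear hactive
      grind [GapState.insertAt]
  all_goals clear hactive; grind [GapState.insertAt, parentGap]

theorem insert_K (h : S.Realizes A K R f) {v : ℕ} (hv : v ∈ K) :
    (S.insertAt v).Realizes A (insert (v + 1) (insert v (K.filter (· < v))))
      (bif f && Nat.beq (K.filter (v < ·)).card 0 then R.image (· + 1) else ∅) true := by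
  obtain ⟨hactive, hAK, hKR, hAR, hA, hK, hR, htA, htK, htR, htop, hlt, hsize, hsA, hsAK, hsKK,
    hsAR, hsKR, hsRR⟩ := h
  cases hcond : f && Nat.beq (K.filter (v < ·)).card 0
  · have : f = false ∨ ∃ w ∈ K, v < w := by
      cases f
      · exact Or.inl rfl
      · right
        by_contra! hle
        rw [Finset.filter_false_of_mem fun w hw => (hle w hw).not_gt] at hcond
        simp at hcond
    rw [cond_false]
    constructor
    · intro g hg
      replace hg : g ≤ S.size + 1 := hg
      rcases le_or_gt g v with hgv | hgv
      · rw [S.insertAt_active_of_le hgv, hactive g (by grind)]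
        clear hactive
        grind [GapState.insertAt]
      · obtain ⟨g, rfl⟩ := Nat.exists_eq_succ_of_ne_zero (Nat.ne_zero_of_lt hgv)
        rw [Nat.succ_eq_add_one, S.insertAt_active_add_one (Nat.le_of_lt_succ hgv),
          hactive g (by omega)]
        clear hactive
        grind [GapState.insertAt]
    all_goals clear hactive; grind [GapState.insertAt, parentGap]
  · have : f = true ∧ ∀ w ∈ K, w ≤ v := by
      simpa [Nat.beq_eq, Finset.filter_eq_empty_iff] using hcond
    rw [cond_true]
    have hvR : ∀ g ∈ R, ¬ S.straddled v g := by grind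
    clear hcond
    constructor
    · intro g hg
      replace hg : g ≤ S.size + 1 := hg
      rcases le_or_gt g v with hgv | hgv
      · rw [S.insertAt_active_of_le hgv, hactive g (by grind)]
        clear hactive
        grind [GapState.insertAt]
      · obtain ⟨g, rfl⟩ := Nat.exists_eq_succ_of_ne_zero (Nat.ne_zero_of_lt hgv)
        rw [Nat.succ_eq_add_one, S.insertAt_active_add_one (Nat.le_of_lt_succ hgv),
          hactive g (by omega)]
        clear hactive
        grind [GapState.insertAt]
    case straddled_KR =>
      intro u hu g hg
      have hmax : (∃ w ∈ insert (v + 1) (insert v (K.filter (· < v))), u < w) ↔ u ≤ v :=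
        ⟨by grind, fun h => ⟨v + 1, by simp, by omega⟩⟩
      rw [hmax]
      obtain ⟨g, hgR, rfl⟩ := Finset.mem_image.1 hg
      have hvg := hKR v hv g hgR
      have hgs := hR g hgR
      rcases le_or_gt u v with huv | huv
      · exact iff_of_true (Or.inr ⟨huv, by omega, hgs⟩) (Or.inl huv)
      · obtain rfl : u = v + 1 := by grind
        have := hvR g hgR
        simp [GapState.insertAt, parentGap, show ¬ g + 1 ≤ v by omega, this]
    all_goals clear hactive; grind [GapState.insertAt, parentGap]

theorem insert_R (h : S.Realizes A K R f) {v : ℕ} (hv : v ∈ R) :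
    (S.insertAt v).Realizes A K ((insert v (R.filter (v < ·))).image (· + 1)) false := by
  obtain ⟨hactive, hAK, hKR, hAR, hA, hK, hR, htA, htK, htR, htop, hlt, hsize, hsA, hsAK, hsKK,
    hsAR, hsKR, hsRR⟩ := h
  constructor
  · intro g hg
    replace hg : g ≤ S.size + 1 := hg
    rcases le_or_gt g v with hgv | hgv
    · rw [S.insertAt_active_of_le hgv, hactive g (by grind)]
      clear hactive
      grind [GapState.insertAt]
    · obtain ⟨g, rfl⟩ := Nat.exists_eq_succ_of_ne_zero (Nat.ne_zero_of_lt hgv)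
      rw [Nat.succ_eq_add_one, S.insertAt_active_add_one (Nat.le_of_lt_succ hgv),
        hactive g (by omega)]
      clear hactive
      grind [GapState.insertAt]
  all_goals clear hactive; grind [GapState.insertAt, parentGap]

theorem insert_size (h : S.Realizes A K R f) :
    (S.insertAt S.size).Realizes A K ∅ true := by
  obtain ⟨hactive, hAK, hKR, hAR, hA, hK, hR, htA, htK, htR, htop, hlt, hsize, hsA, hsAK, hsKK,
    hsAR, hsKR, hsRR⟩ := h
  constructor
  · intro g hg
    replace hg : g ≤ S.size + 1 := hg
    rcases le_or_gt g S.size with hgv | hgv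
    · rw [S.insertAt_active_of_le hgv, hactive g (by grind)]
      clear hactive
      grind [GapState.insertAt]
    · obtain ⟨g, rfl⟩ := Nat.exists_eq_succ_of_ne_zero (Nat.ne_zero_of_lt hgv)
      rw [Nat.succ_eq_add_one, S.insertAt_active_add_one (Nat.le_of_lt_succ hgv),
        hactive g (by omega)]
      clear hactive
      grind [GapState.insertAt]
  all_goals clear hactive; grind [GapState.insertAt, parentGap]

end GapState.Realizes

theorem card_image_add_one (A : Finset ℕ) : (A.image (· + 1)).card = A.card :=
  Finset.card_image_of_injective _ (add_left_injective 1)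

theorem GapState.Realizes.extensions_eq {S : GapState} {A K R : Finset ℕ} {f : Bool}
    (h : S.Realizes A K R f) (s : ℕ) :
    S.extensions s = descentCount s A.card K.card R.card f := by
  classical
  induction s generalizing S A K R f with
  | zero => rfl
  | succ s ih =>
    have hactive : (Finset.range (S.size + 1)).filter S.active = A ∪ (K ∪ (R ∪ {S.size})) := by
      ext g
      simp only [Finset.mem_filter, Finset.mem_range, Finset.mem_union, Finset.mem_singleton]
      have := h.active_iff g
      have := h.lt_A g
      have := h.lt_K g
      have := h.lt_R g
      grind
    rw [GapState.extensions, hactive, Finset.sum_union, Finset.sum_union, Finset.sum_union,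
      Finset.sum_singleton]
    rotate_left
    · have := h.lt_R
      simp only [Finset.disjoint_left]
      grind
    · have := h.lt_K
      have := h.lt_KR
      simp only [Finset.disjoint_left]
      grind
    · have := h.lt_A
      have := h.lt_AK
      have := h.lt_AR
      simp only [Finset.disjoint_left]
      grind
    simp only [descentCount, sumBelow_eq, forceAt_eq]
    congr 1
    · rw [← sum_rank A fun i j => descentCount s (i + 1) 1 j true]
      refine Finset.sum_congr rfl fun v hv => ?_
      rw [ih (h.insert_A hv), card_image_add_one, Finset.card_insert_of_notMem (by simp),
        Finset.card_singleton]
    congr 1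
    · rw [← sum_rank K fun i j => descentCount s A.card (i + 2)
        (bif f && Nat.beq j 0 then R.card else 0) true]
      refine Finset.sum_congr rfl fun v hv => ?_
      rw [ih (h.insert_K hv), Finset.card_insert_of_notMem (by simp),
        Finset.card_insert_of_notMem (by simp)]
      cases f && Nat.beq (K.filter (v < ·)).card 0 <;> simp [card_image_add_one]
    congr 1
    · rw [← sum_rank R fun _ j => descentCount s A.card K.card (j + 1) false]
      refine Finset.sum_congr rfl fun v hv => ?_
      rw [ih (h.insert_R hv), card_image_add_one, Finset.card_insert_of_notMem (by simp)]
    · rw [ih h.insert_size, Finset.card_empty]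

theorem increasingState_insert_self (m : ℕ) :
    (increasingState m).insertAt m = increasingState (m + 1) := by
  simp only [GapState.insertAt, increasingState, GapState.mk.injEq]
  refine ⟨trivial, ?_, ?_, ?_⟩ <;> funext <;> simp

theorem increasingState_insert_realizes {m v : ℕ} (hv : v < m) :
    ((increasingState m).insertAt v).Realizes (Finset.range (v + 1)) {v + 1}
      (Finset.Ico (v + 2) (m + 1)) true := by
  constructor <;> simp [GapState.insertAt, increasingState] <;> grind

theorem extensions_increasingState (s m : ℕ) :
    (increasingState m).extensions s = increasingCount s m := by
  classical
  induction s generalizing m with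
  | zero => rfl
  | succ s ih =>
    simp only [increasingCount, sumBelow_eq, forceAt_eq]
    rw [GapState.extensions, Finset.filter_true_of_mem (p := (increasingState m).active)
      fun _ _ => trivial]
    rw [show (increasingState m).size = m from rfl, Finset.sum_range_succ,
      increasingState_insert_self, ih]
    congr 1
    refine Finset.sum_congr rfl fun v hv => ?_
    rw [(increasingState_insert_realizes (Finset.mem_range.1 hv)).extensions_eq]
    rw [Finset.card_range, Finset.card_singleton, Nat.card_Ico,
      show m + 1 - (v + 2) = m - 1 - v by omega]

theorem dCount_eq_increasingCount (n : ℕ) : dCount n = increasingCount n 0 := by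
  rw [dCount_eq_extensions, extensions_increasingState]

end InsertionTree

theorem dCount_initial_terms :
    dCount 1 = 1 ∧ dCount 2 = 2 ∧ dCount 3 = 6 ∧ dCount 4 = 22 ∧ dCount 5 = 88 ∧
    dCount 6 = 366 ∧ dCount 7 = 1556 ∧ dCount 8 = 6720 ∧ dCount 9 = 29396 ∧
    dCount 10 = 129996 ∧ dCount 11 = 580276 ∧ dCount 12 = 2611290 := by
  simp only [InsertionTree.dCount_eq_increasingCount]
  decide +kernel
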